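/- arXiv:2605.19388 — 3 statements merged into one kernel-verified Lean document; each statement's English description precedes it below -/
import Mathlib

section
/- Let N, L be positive integers and M^(1), …, M^(L) positive integers with M = Σ_l M^(l). For each n = 1, …, N and l = 1, …, L, let R_n^(l) be an M^(l) × M^(l) Hermitian positive semidefinite complex matrix, and let R_n = blkdiag(R_n^(1), …, R_n^(L)) be the M × M block-diagonal matrix with these blocks. Assume S := Σ_{n=1}^N R_n is positive definite. Then R_1, …, R_N are jointly diagonalizable if and only if, for every l = 1, …, L, the matrices R_1^(l), …, R_N^(l) are jointly diagonalizable. -/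
open Matrix
open scoped ComplexOrder

/-- A family of Hermitian matrices is *jointly diagonalizable* if there exists a
nonsingular matrix `W` such that `Wᴴ * R n * W` is diagonal for all `n`. -/
def JointlyDiagonalizable {m : Type*} [Fintype m] [DecidableEq m] {ι : Type*}
    (R : ι → Matrix m m ℂ) : Prop :=
  ∃ W : Matrix m m ℂ, IsUnit W.det ∧ ∀ n, (Wᴴ * R n * W).IsDiag

/-!
The columns of `W` form a basis `w` that is orthogonal for every sesquilinear form
`x, y ↦ xᴴ * R n * y`; put `d n i = (w i)ᴴ * R n * w i`. Projecting `w` to one block gives a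
spanning family of that block whose Gram matrices are `diagonal (d n) * P`, where `P` is the
projection in the coordinates of `w`; since the blocks are orthogonal to each other, `P` is
self-adjoint: `diagonal (d n) * P = Pᴴ * diagonal (d n)`. Comparing the entries `(i, j)` and
`(j, i)`, the Gram matrices vanish at `(i, j)` unless `d · i` and `d · j` are nonzero real multiples
of each other. Within a class of such indices all Gram matrices are scalar multiples of one
Hermitian matrix, so the spectral theorem, applied class by class, turns the projected family into
one that is spanning and orthogonal for every form. Such a family contains an orthogonal basis.
-/

theorem exists_injective_isUnit_det_submatrix {K m k : Type*} [Field K] [Fintype m] [DecidableEq m]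
    [Fintype k] {X : Matrix m k K} {Y : Matrix k m K} (hXY : X * Y = 1) :
    ∃ f : m → k, f.Injective ∧ IsUnit (X.submatrix id f).det := by
  obtain ⟨κ, a, ha, hspan, hindep⟩ := exists_linearIndependent' K X.col
  have hcol : Submodule.span K (Set.range X.col) = ⊤ := by
    rw [← range_mulVecLin, LinearMap.range_eq_top]
    exact fun v => ⟨Y *ᵥ v, by rw [mulVecLin_apply, mulVec_mulVec, hXY, one_mulVec]⟩
  let b : Module.Basis κ K (m → K) := .mk hindep (hspan.trans hcol).ge
  let e : m ≃ κ := (Pi.basisFun K m).indexEquiv b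
  refine ⟨a ∘ e, ha.comp e.injective, ?_⟩
  rw [← isUnit_iff_isUnit_det, ← linearIndependent_cols_iff_isUnit]
  exact hindep.comp e e.injective

namespace JointlyDiagonalizable

variable {ι m k o : Type*} [Fintype m] [DecidableEq m] [Fintype k] [DecidableEq k]
  [DecidableEq o]

theorem of_conjTranspose_mul_mul {R : ι → Matrix m m ℂ} {X : Matrix m k ℂ} {Y : Matrix k m ℂ}
    (hXY : X * Y = 1) (h : JointlyDiagonalizable fun n => Xᴴ * R n * X) :
    JointlyDiagonalizable R := by
  obtain ⟨V, hV, hdiag⟩ := h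
  have hXVY : X * V * (V⁻¹ * Y) = 1 := by
    rw [Matrix.mul_assoc, mul_nonsing_inv_cancel_left _ _ hV, hXY]
  obtain ⟨f, hf, hunit⟩ := exists_injective_isUnit_det_submatrix hXVY
  refine ⟨(X * V).submatrix id f, hunit, fun n => ?_⟩
  convert (hdiag n).submatrix hf using 1
  calc ((X * V).submatrix id f)ᴴ * R n * (X * V).submatrix id f
      = ((X * V)ᴴ * R n * (X * V)).submatrix f f := rfl
    _ = (Vᴴ * (Xᴴ * R n * X) * V).submatrix f f := by
      simp only [conjTranspose_mul, Matrix.mul_assoc]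

theorem of_submatrix_equiv {R : ι → Matrix m m ℂ} (e : k ≃ m)
    (h : JointlyDiagonalizable fun n => (R n).submatrix e e) : JointlyDiagonalizable R := by
  obtain ⟨W, hW, hdiag⟩ := h
  refine ⟨W.submatrix e.symm e.symm, by rwa [det_submatrix_equiv_self], fun n => ?_⟩
  convert (hdiag n).submatrix e.symm.injective using 1
  simp [← submatrix_mul_equiv _ _ _ e.symm]

theorem smul_of_isHermitian {H : Matrix m m ℂ} (hH : H.IsHermitian) (a : ι → ℂ) :
    JointlyDiagonalizable fun n => a n • H := by
  let U : Matrix m m ℂ := hH.eigenvectorUnitary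
  have hU : (Uᴴ * H * U).IsDiag := by
    have h := hH.conjStarAlgAut_star_eigenvectorUnitary
    rw [Unitary.conjStarAlgAut_star_apply] at h
    exact h ▸ isDiag_diagonal _
  refine ⟨U, UnitaryGroup.det_isUnit _, fun n => ?_⟩
  rw [Matrix.mul_smul, Matrix.smul_mul]
  exact hU.smul _

theorem blockDiagonal' [Fintype o] {m : o → Type*} [∀ l, Fintype (m l)] [∀ l, DecidableEq (m l)]
    {R : ι → ∀ l, Matrix (m l) (m l) ℂ} (h : ∀ l, JointlyDiagonalizable fun n => R n l) :
    JointlyDiagonalizable fun n => Matrix.blockDiagonal' (R n) := by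
  choose W hW hdiag using h
  have hinv : Matrix.blockDiagonal' (fun l => (W l)⁻¹) * Matrix.blockDiagonal' W = 1 := by
    rw [← blockDiagonal'_mul, ← blockDiagonal'_one]
    exact congrArg _ (funext fun l => nonsing_inv_mul _ (hW l))
  refine ⟨Matrix.blockDiagonal' W, isUnit_det_of_left_inverse hinv, fun n => ?_⟩
  rw [blockDiagonal'_conjTranspose, ← blockDiagonal'_mul, ← blockDiagonal'_mul]
  rintro ⟨l, i⟩ ⟨l', j⟩ hij
  obtain rfl | hl := eq_or_ne l l'
  · rw [blockDiagonal'_apply_eq]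
    exact hdiag l n fun h => hij (h ▸ rfl)
  · exact blockDiagonal'_apply_ne _ _ _ hl

theorem of_toSquareBlock [Finite o] {G : ι → Matrix k k ℂ} (q : k → o)
    (hq : ∀ n i j, G n i j ≠ 0 → q i = q j)
    (h : ∀ c, JointlyDiagonalizable fun n => (G n).toSquareBlock q c) :
    JointlyDiagonalizable G := by
  cases nonempty_fintype o
  refine of_submatrix_equiv (Equiv.sigmaFiberEquiv q) ?_
  convert blockDiagonal' h with n
  ext ⟨c, i, hi⟩ ⟨c', j, hj⟩
  obtain rfl | hc := eq_or_ne c c'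
  · rw [blockDiagonal'_apply_eq]
    rfl
  · rw [blockDiagonal'_apply_ne _ _ _ hc]
    exact of_not_not fun hG => hc (hi ▸ hj ▸ hq n i j hG)

end JointlyDiagonalizable

theorem mem_orbit_units_real_of_mul_eq_star_mul {ι : Type*} {x y : ι → ℂ} {p q : ℂ}
    (hxy : ∀ n, x n * p = star q * y n) (hyx : ∀ n, y n * q = star p * x n)
    (hne : ∃ n, x n * p ≠ 0) : x ∈ MulAction.orbit ℝˣ y := by
  obtain ⟨n₀, hn₀⟩ := hne
  have hp : p ≠ 0 := right_ne_zero_of_mul hn₀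
  have hq : star q ≠ 0 := left_ne_zero_of_mul (hxy n₀ ▸ hn₀)
  have hy : y n₀ ≠ 0 := right_ne_zero_of_mul (hxy n₀ ▸ hn₀)
  have hpq : star q * star p = q * p := by
    refine mul_right_cancel₀ hy ?_
    calc star q * star p * y n₀ = star p * (x n₀ * p) := by rw [hxy]; ring
      _ = q * p * y n₀ := by rw [← mul_assoc, ← hyx]; ring
  obtain ⟨r, hr⟩ : ∃ r : ℝ, star q / p = r := by
    refine Complex.conj_eq_iff_real.mp ?_
    rw [starRingEnd_apply, star_div₀, star_star, div_eq_div_iff (star_ne_zero.mpr hp) hp, hpq]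
  have hr₀ : r ≠ 0 := fun h => div_ne_zero hq hp (by rw [hr, h, Complex.ofReal_zero])
  refine ⟨Units.mk0 r hr₀, funext fun n => ?_⟩
  calc r • y n = star q / p * y n := by rw [hr, Complex.real_smul]
    _ = x n := by rw [div_mul_eq_mul_div, ← hxy, mul_div_cancel_right₀ _ hp]

section SelfAdjoint

variable {ι k : Type*} [Fintype k] [DecidableEq k] {d : ι → k → ℂ} {P : Matrix k k ℂ}

theorem exists_isHermitian_diagonal_mul_eq_smul
    (hP : ∀ n, diagonal (d n) * P = Pᴴ * diagonal (d n)) (s : k → ℝ) (a : ι → ℂ)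
    (hd : ∀ n i, d n i = s i • a n) :
    ∃ H : Matrix k k ℂ, H.IsHermitian ∧ ∀ n, diagonal (d n) * P = a n • H := by
  have hdiag (n : ι) : diagonal (d n) = a n • diagonal (fun i => (s i : ℂ)) := by
    rw [← diagonal_smul]
    exact congrArg diagonal (funext fun i => by simp [hd, mul_comm])
  by_cases ha : a = 0
  · exact ⟨0, isHermitian_zero, fun n => by simp [hdiag, ha]⟩
  · obtain ⟨n₀, hn₀⟩ := Function.ne_iff.mp ha
    refine ⟨diagonal (fun i => (s i : ℂ)) * P, ?_, fun n => by rw [hdiag, Matrix.smul_mul]⟩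
    have hs : diagonal (fun i => (s i : ℂ)) * P = Pᴴ * diagonal (fun i => (s i : ℂ)) := by
      refine smul_right_injective _ hn₀ ?_
      simpa only [hdiag, Matrix.smul_mul, Matrix.mul_smul] using hP n₀
    have hreal : star (fun i => (s i : ℂ)) = fun i => (s i : ℂ) :=
      funext fun i => Complex.conj_ofReal _
    rw [IsHermitian, conjTranspose_mul, diagonal_conjTranspose, hreal, hs]

theorem jointlyDiagonalizable_diagonal_mul
    (hP : ∀ n, diagonal (d n) * P = Pᴴ * diagonal (d n)) :
    JointlyDiagonalizable fun n => diagonal (d n) * P := by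
  classical
  let realMultiple : Setoid k := (MulAction.orbitRel ℝˣ (ι → ℂ)).comap fun i n => d n i
  let q : k → Quotient realMultiple := Quotient.mk realMultiple
  have hentry (n : ι) (i j : k) : d n i * P i j = star (P j i) * d n j := by
    simpa only [diagonal_mul, mul_diagonal, conjTranspose_apply] using congrFun₂ (hP n) i j
  refine .of_toSquareBlock q (fun n i j hG => Quotient.sound ?_) fun c => ?_
  · rw [diagonal_mul] at hG
    exact mem_orbit_units_real_of_mul_eq_star_mul (hentry · i j) (hentry · j i) ⟨n, hG⟩
  · have hmultiple (i : {i // q i = c}) : ∃ s : ℝˣ, (s • fun n => d n c.out) = fun n => d n i :=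
      Quotient.exact (i.2.trans c.out_eq.symm)
    choose s hs using hmultiple
    have hblock (n : ι) : (diagonal (d n) * P).toSquareBlock q c =
        diagonal (fun i : {i // q i = c} => d n i) * P.toSquareBlock q c := by
      ext i j
      simp only [toSquareBlock_def, of_apply, diagonal_mul]
    obtain ⟨H, hH, hsmul⟩ := exists_isHermitian_diagonal_mul_eq_smul
      (d := fun n (i : {i // q i = c}) => d n i) (P := P.toSquareBlock q c)
      (fun n => by ext i j; simpa [toSquareBlock_def] using hentry n i j)
      (fun i => s i) (fun n => d n c.out) (fun n i => (congrFun (hs i) n).symm)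
    simpa only [hblock, hsmul] using JointlyDiagonalizable.smul_of_isHermitian hH _

end SelfAdjoint

theorem JointlyDiagonalizable.of_isDiag_compression {ι m k : Type*} [Fintype m] [DecidableEq m]
    [Fintype k] {R : ι → Matrix m m ℂ} {D : ι → Matrix k k ℂ} {X : Matrix m k ℂ} {Y : Matrix k m ℂ}
    (hXY : X * Y = 1) (hD : ∀ n, (D n).IsDiag) (hDY : ∀ n, D n * Y = Xᴴ * R n)
    (hYD : ∀ n, Yᴴ * D n = R n * X) : JointlyDiagonalizable R := by
  classical
  have hdiagonal (n : ι) : diagonal (D n).diag = D n := (hD n).diagonal_diag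
  have hgram (n : ι) : diagonal (D n).diag * (Y * X) = Xᴴ * R n * X := by
    rw [hdiagonal, ← Matrix.mul_assoc, hDY]
  have hselfAdjoint (n : ι) :
      diagonal (D n).diag * (Y * X) = (Y * X)ᴴ * diagonal (D n).diag := by
    rw [hgram, hdiagonal, conjTranspose_mul, Matrix.mul_assoc, Matrix.mul_assoc, hYD]
  refine of_conjTranspose_mul_mul hXY ?_
  simpa only [hgram] using jointlyDiagonalizable_diagonal_mul hselfAdjoint

section Blocks

variable {α o k : Type*} {m m' : o → Type*} [NonUnitalNonAssocSemiring α] [Fintype o]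
  [DecidableEq o] [∀ l, Fintype (m l)]

theorem submatrix_mul_blockDiagonal' (A : Matrix k (Σ l, m l) α)
    (M : ∀ l, Matrix (m l) (m' l) α) (l : o) :
    (A * blockDiagonal' M).submatrix id (Sigma.mk l) = A.submatrix id (Sigma.mk l) * M l := by
  ext i j
  simp only [submatrix_apply, mul_apply, id_eq, Fintype.sum_sigma]
  rw [Fintype.sum_eq_single l fun l' hl => by simp [blockDiagonal'_apply_ne _ _ _ hl]]
  simp only [blockDiagonal'_apply_eq]

theorem submatrix_blockDiagonal'_mul (M : ∀ l, Matrix (m' l) (m l) α)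
    (A : Matrix (Σ l, m l) k α) (l : o) :
    (blockDiagonal' M * A).submatrix (Sigma.mk l) id = M l * A.submatrix (Sigma.mk l) id := by
  ext i j
  simp only [submatrix_apply, mul_apply, id_eq, Fintype.sum_sigma]
  rw [Fintype.sum_eq_single l fun l' hl => by simp [blockDiagonal'_apply_ne _ _ _ hl.symm]]
  simp only [blockDiagonal'_apply_eq]

end Blocks

theorem JointlyDiagonalizable.of_blockDiagonal' {ι o : Type*} {m : o → Type*} [Fintype o]
    [DecidableEq o] [∀ l, Fintype (m l)] [∀ l, DecidableEq (m l)]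
    {R : ι → ∀ l, Matrix (m l) (m l) ℂ}
    (h : JointlyDiagonalizable fun n => Matrix.blockDiagonal' (R n)) (l : o) :
    JointlyDiagonalizable fun n => R n l := by
  obtain ⟨W, hW, hdiag⟩ := h
  let X : Matrix (m l) (Σ l, m l) ℂ := W.submatrix (Sigma.mk l) id
  let Y : Matrix (Σ l, m l) (m l) ℂ := W⁻¹.submatrix id (Sigma.mk l)
  let D (n : ι) := Wᴴ * Matrix.blockDiagonal' (R n) * W
  have hXY : X * Y = 1 := by
    rw [← submatrix_mul _ _ _ _ _ Function.bijective_id, mul_nonsing_inv _ hW,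
      submatrix_one _ sigma_mk_injective]
  have hDY (n : ι) : D n * Y = Xᴴ * R n l := by
    calc D n * Y = (D n * W⁻¹).submatrix id (Sigma.mk l) := rfl
      _ = (Wᴴ * Matrix.blockDiagonal' (R n)).submatrix id (Sigma.mk l) := by
        rw [mul_nonsing_inv_cancel_right _ _ hW]
      _ = Xᴴ * R n l := submatrix_mul_blockDiagonal' _ _ _
  have hYD (n : ι) : Yᴴ * D n = R n l * X := by
    calc Yᴴ * D n = (W⁻¹ᴴ * D n).submatrix (Sigma.mk l) id := rfl
      _ = ((W * W⁻¹)ᴴ * (Matrix.blockDiagonal' (R n) * W)).submatrix (Sigma.mk l) id := by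
        simp only [D, conjTranspose_mul, Matrix.mul_assoc]
      _ = (Matrix.blockDiagonal' (R n) * W).submatrix (Sigma.mk l) id := by
        rw [mul_nonsing_inv _ hW, conjTranspose_one, Matrix.one_mul]
      _ = R n l * X := submatrix_blockDiagonal'_mul _ _ _
  exact of_isDiag_compression hXY hdiag hDY hYD

theorem blockDiagonal_jointlyDiagonalizable_iff_general {ι o : Type*} {m : o → Type*} [Fintype o]
    [DecidableEq o] [∀ l, Fintype (m l)] [∀ l, DecidableEq (m l)]
    (R : ι → ∀ l, Matrix (m l) (m l) ℂ) :
    JointlyDiagonalizable (fun n => Matrix.blockDiagonal' (R n)) ↔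
      ∀ l, JointlyDiagonalizable (fun n => R n l) :=
  ⟨.of_blockDiagonal', .blockDiagonal'⟩

/-- the block-diagonal matrices `R n = blkdiag (R n 1, …, R n L)` are jointly
diagonalizable iff for every `l` the blocks `R 1 l, …, R N l` are jointly diagonalizable,
provided each block is Hermitian PSD and `S = ∑ n, R n` is positive definite. -/
theorem blockDiagonal_jointlyDiagonalizable_iff
    (N L : ℕ) (hN : 0 < N) (hL : 0 < L) (M : Fin L → ℕ) (hM : ∀ l, 0 < M l)
    (R : Fin N → ∀ l, Matrix (Fin (M l)) (Fin (M l)) ℂ)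
    (hR : ∀ n l, (R n l).PosSemidef)
    (hS : (∑ n, Matrix.blockDiagonal' (R n)).PosDef) :
    JointlyDiagonalizable (fun n => Matrix.blockDiagonal' (R n)) ↔
      ∀ l, JointlyDiagonalizable (fun n => R n l) :=
  blockDiagonal_jointlyDiagonalizable_iff_general R
end

section
/- Let N, L be positive integers and M^(1), …, M^(L) positive integers with M = Σ_l M^(l). For each n = 1, …, N and l = 1, …, L, let R_n^(l) be an M^(l) × M^(l) Hermitian positive semidefinite complex matrix, and let R_n = blkdiag(R_n^(1), …, R_n^(L)). Assume S := Σ_{n=1}^N R_n is positive definite and that R_1, …, R_N are jointly diagonalizable. Then for every l = 1, …, L, the matrices R_1^(l), …, R_N^(l) are jointly diagonalizable. -/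
open Matrix
open scoped ComplexOrder

/-!
If `Wᴴ * A * W`, `Wᴴ * S * W` and `Wᴴ * B * W` are all diagonal, then `A * S⁻¹ * B = B * S⁻¹ * A`,
because diagonal matrices commute. Conversely, when `S` is positive definite, write `S⁻¹ = C * Cᴴ`:
the relations `R i * S⁻¹ * R j = R j * S⁻¹ * R i` say that the Hermitian matrices `Cᴴ * R n * C`
commute, so some unitary `U` diagonalizes all of them, and `W = C * U` diagonalizes all the `R n`.
For block-diagonal `R n` and `S` these relations hold if and only if they hold in each block.
-/

section JointEigenbasis

open Module
open scoped Function

variable {𝕜 E ι κ : Type*} [RCLike 𝕜] [Fintype κ]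

theorem exists_orthonormalBasis_forall_apply_eq_smul [NormedAddCommGroup E]
    [InnerProductSpace 𝕜 E] [FiniteDimensional 𝕜 E] {T : ι → E →ₗ[𝕜] E}
    (hE : finrank 𝕜 E = Fintype.card κ) (hT : ∀ i, (T i).IsSymmetric)
    (hcomm : Pairwise (Commute on T)) :
    ∃ (b : OrthonormalBasis κ 𝕜 E) (μ : κ → ι → 𝕜), ∀ i a, T i (b a) = μ a i • b a := by
  classical
  let V : (ι → 𝕜) → Submodule 𝕜 E := fun χ => ⨅ i, End.eigenspace (T i) (χ i)
  have orthogonal : OrthogonalFamily 𝕜 (fun χ => V χ) fun χ => (V χ).subtypeₗᵢ :=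
    LinearMap.IsSymmetric.orthogonalFamily_iInf_eigenspaces hT
  have internal : DirectSum.IsInternal V :=
    LinearMap.IsSymmetric.directSum_isInternal_of_pairwise_commute hT hcomm
  have : Fintype {χ // V χ ≠ ⊥} :=
    (WellFoundedGT.finite_ne_bot_of_iSupIndep orthogonal.independent).fintype
  have internal_ne_bot := DirectSum.isInternal_ne_bot_iff.mpr internal
  have orthogonal_ne_bot : OrthogonalFamily 𝕜 (fun χ : {χ // V χ ≠ ⊥} => V χ)
      fun χ => (V χ).subtypeₗᵢ :=
    orthogonal.comp Subtype.val_injective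
  let e := (Fintype.equivFin κ).symm
  let b := internal_ne_bot.subordinateOrthonormalBasis hE orthogonal_ne_bot
  let μ a := (internal_ne_bot.subordinateOrthonormalBasisIndex hE a orthogonal_ne_bot).val
  have mem_joint_eigenspace (a) : b a ∈ V (μ a) :=
    internal_ne_bot.subordinateOrthonormalBasis_subordinate hE a orthogonal_ne_bot
  refine ⟨b.reindex e, fun a => μ (e.symm a), fun i a => ?_⟩
  rw [OrthonormalBasis.reindex_apply]
  exact End.mem_eigenspace_iff.mp ((Submodule.mem_iInf _).mp (mem_joint_eigenspace _) i)

theorem exists_mem_unitaryGroup_forall_isDiag [DecidableEq κ] {T : ι → Matrix κ κ 𝕜}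
    (hT : ∀ i, (T i).IsHermitian) (hcomm : Pairwise (Commute on T)) :
    ∃ U ∈ unitaryGroup κ 𝕜, ∀ i, (Uᴴ * T i * U).IsDiag := by
  have toEuclideanLin_commute : Pairwise (Commute on fun i => (T i).toEuclideanLin) := by
    intro i j hij
    ext1 v
    simp only [End.mul_apply, toLpLin_apply, mulVec_mulVec, (hcomm hij).eq]
  obtain ⟨b, μ, hb⟩ := exists_orthonormalBasis_forall_apply_eq_smul finrank_euclideanSpace
    (fun i => isSymmetric_toEuclideanLin_iff.mpr (hT i)) toEuclideanLin_commute
  let U := (EuclideanSpace.basisFun κ 𝕜).toBasis.toMatrix b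
  have hU : U ∈ unitaryGroup κ 𝕜 :=
    (EuclideanSpace.basisFun κ 𝕜).toMatrix_orthonormalBasis_mem_unitary b
  have mul_eq_mul_diagonal (i) : T i * U = U * diagonal fun a => μ a i := by
    ext r a
    rw [mul_diagonal, mul_comm]
    exact congr($(hb i a) r)
  refine ⟨U, hU, fun i => ?_⟩
  rw [Matrix.mul_assoc, mul_eq_mul_diagonal, ← Matrix.mul_assoc, ← star_eq_conjTranspose,
    mem_unitaryGroup_iff'.mp hU, Matrix.one_mul]
  exact isDiag_diagonal _

end JointEigenbasis

section Diagonal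

variable {α m : Type*} [Fintype m]

theorem commute_of_isDiag [NonUnitalNonAssocCommSemiring α] {A B : Matrix m m α}
    (hA : A.IsDiag) (hB : B.IsDiag) : Commute A B := by
  classical
  rw [← hA.diagonal_diag, ← hB.diagonal_diag]
  exact commute_diagonal _ _

variable [CommRing α] [DecidableEq m]

theorem isDiag_inv {A : Matrix m m α} (hA : A.IsDiag) : A⁻¹.IsDiag := by
  rw [← hA.diagonal_diag, inv_diagonal]
  exact isDiag_diagonal _

theorem mul_inv_mul_comm_of_isDiag {P Q A S B : Matrix m m α} (hP : IsUnit P) (hQ : IsUnit Q)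
    (hA : (P * A * Q).IsDiag) (hS : (P * S * Q).IsDiag) (hB : (P * B * Q).IsDiag) :
    A * S⁻¹ * B = B * S⁻¹ * A := by
  have conj_mul_inv_mul (X Y : Matrix m m α) :
      P * (X * S⁻¹ * Y) * Q = P * X * Q * (P * S * Q)⁻¹ * (P * Y * Q) := by
    rw [Matrix.mul_inv_rev, Matrix.mul_inv_rev]
    simp only [Matrix.mul_assoc]
    rw [mul_nonsing_inv_cancel_left _ _ ((isUnit_iff_isUnit_det _).mp hQ),
      nonsing_inv_mul_cancel_left _ _ ((isUnit_iff_isUnit_det _).mp hP)]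
  have hSinv := isDiag_inv hS
  refine hP.mul_left_cancel (hQ.mul_right_cancel ?_)
  calc P * (A * S⁻¹ * B) * Q
      = P * A * Q * (P * S * Q)⁻¹ * (P * B * Q) := conj_mul_inv_mul A B
    _ = P * B * Q * (P * A * Q * (P * S * Q)⁻¹) :=
        ((commute_of_isDiag hA hB).mul_left (commute_of_isDiag hSinv hB)).eq
    _ = P * B * Q * ((P * S * Q)⁻¹ * (P * A * Q)) := by rw [(commute_of_isDiag hA hSinv).eq]
    _ = P * (B * S⁻¹ * A) * Q := by rw [conj_mul_inv_mul, Matrix.mul_assoc (P * B * Q)]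

end Diagonal

namespace JointlyDiagonalizable

variable {ι m : Type*} [Fintype m] [DecidableEq m] {R : ι → Matrix m m ℂ} {S : Matrix m m ℂ}

theorem of_commute (hR : ∀ i, (R i).IsHermitian) (hcomm : ∀ i j, Commute (R i) (R j)) :
    JointlyDiagonalizable R := by
  obtain ⟨U, hU, hdiag⟩ := exists_mem_unitaryGroup_forall_isDiag hR fun i j _ => hcomm i j
  exact ⟨U, UnitaryGroup.det_isUnit ⟨U, hU⟩, hdiag⟩

theorem of_conjTranspose_mul_mul_s2 {C : Matrix m m ℂ} (hC : IsUnit C)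
    (h : JointlyDiagonalizable fun i => Cᴴ * R i * C) : JointlyDiagonalizable R := by
  obtain ⟨W, hW, hdiag⟩ := h
  refine ⟨C * W, ?_, fun i => ?_⟩
  · rw [det_mul]
    exact ((isUnit_iff_isUnit_det C).mp hC).mul hW
  · simpa only [conjTranspose_mul, Matrix.mul_assoc] using hdiag i

open scoped MatrixOrder in
theorem of_mul_inv_mul_comm (hS : S.PosDef) (hR : ∀ i, (R i).IsHermitian)
    (hcomm : ∀ i j, R i * S⁻¹ * R j = R j * S⁻¹ * R i) : JointlyDiagonalizable R := by
  obtain ⟨C, hC, hSC⟩ :=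
    CStarAlgebra.isStrictlyPositive_iff_eq_mul_star_self.mp hS.inv.isStrictlyPositive
  have conj_mul_conj (i j) : Cᴴ * R i * C * (Cᴴ * R j * C) = Cᴴ * (R i * S⁻¹ * R j) * C := by
    simp only [hSC, star_eq_conjTranspose, Matrix.mul_assoc]
  refine of_conjTranspose_mul_mul_s2 hC (of_commute
    (fun i => isHermitian_conjTranspose_mul_mul C (hR i)) fun i j => ?_)
  rw [commute_iff_eq, conj_mul_conj, conj_mul_conj, hcomm]

theorem mul_inv_mul_comm (h : JointlyDiagonalizable R) (hS : S ∈ Submodule.span ℂ (Set.range R))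
    (i j : ι) : R i * S⁻¹ * R j = R j * S⁻¹ * R i := by
  obtain ⟨W, hW, hdiag⟩ := h
  have isUnit_W : IsUnit W := (isUnit_iff_isUnit_det W).mpr hW
  have isDiag_S : (Wᴴ * S * W).IsDiag := by
    induction hS using Submodule.span_induction with
    | mem _ hmem => obtain ⟨n, rfl⟩ := hmem; exact hdiag n
    | zero => simp only [Matrix.mul_zero, Matrix.zero_mul, isDiag_zero]
    | add A B _ _ hA hB => simpa only [Matrix.mul_add, Matrix.add_mul] using hA.add hB
    | smul c A _ hA => simpa only [Matrix.mul_smul, Matrix.smul_mul] using hA.smul c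
  exact mul_inv_mul_comm_of_isDiag isUnit_W.star isUnit_W (hdiag i) isDiag_S (hdiag j)

end JointlyDiagonalizable

section BlockDiagonal

variable {α ι o : Type*} {m : o → Type*} [DecidableEq o]

theorem mem_range_blockDiagonal'_of_mem_span [Semiring α] {R : ι → ∀ l, Matrix (m l) (m l) α}
    {S : Matrix (Σ l, m l) (Σ l, m l) α}
    (hS : S ∈ Submodule.span α (Set.range fun n => blockDiagonal' (R n))) :
    S ∈ Set.range (blockDiagonal' : (∀ l, Matrix (m l) (m l) α) → _) := by
  induction hS using Submodule.span_induction with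
  | mem _ hmem => obtain ⟨n, rfl⟩ := hmem; exact ⟨R n, rfl⟩
  | zero => exact ⟨0, blockDiagonal'_zero⟩
  | add _ _ _ _ hA hB =>
    obtain ⟨A, rfl⟩ := hA
    obtain ⟨B, rfl⟩ := hB
    exact ⟨A + B, blockDiagonal'_add A B⟩
  | smul c _ _ hA =>
    obtain ⟨A, rfl⟩ := hA
    exact ⟨c • A, blockDiagonal'_smul c A⟩

theorem posDef_of_posDef_blockDiagonal' [Ring α] [PartialOrder α] [StarRing α]
    {S : ∀ l, Matrix (m l) (m l) α}
    (hS : (blockDiagonal' S).PosDef) (l : o) : (S l).PosDef := by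
  convert hS.submatrix (e := Sigma.mk l) sigma_mk_injective using 1
  ext a b
  exact (blockDiagonal'_apply_eq S l a b).symm

variable [Fintype o] [∀ l, Fintype (m l)] [∀ l, DecidableEq (m l)]

theorem blockDiagonal'_inv [CommRing α] {S : ∀ l, Matrix (m l) (m l) α}
    (hS : ∀ l, IsUnit (S l)) : (blockDiagonal' S)⁻¹ = blockDiagonal' fun l => (S l)⁻¹ := by
  apply inv_eq_right_inv
  rw [← blockDiagonal'_mul, ← blockDiagonal'_one]
  congr 1
  ext1 l
  exact mul_nonsing_inv _ ((isUnit_iff_isUnit_det _).mp (hS l))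

end BlockDiagonal

theorem blocks_jointlyDiagonalizable_of_blockDiagonal_general {ι o : Type*} {m : o → Type*}
    [Fintype o] [DecidableEq o] [∀ l, Fintype (m l)] [∀ l, DecidableEq (m l)]
    {R : ι → ∀ l, Matrix (m l) (m l) ℂ} {S : Matrix (Σ l, m l) (Σ l, m l) ℂ}
    (hR : ∀ n l, (R n l).IsHermitian) (hS : S.PosDef)
    (hSR : S ∈ Submodule.span ℂ (Set.range fun n => blockDiagonal' (R n)))
    (hJD : JointlyDiagonalizable fun n => blockDiagonal' (R n)) (l : o) :
    JointlyDiagonalizable fun n => R n l := by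
  obtain ⟨S, rfl⟩ := mem_range_blockDiagonal'_of_mem_span hSR
  have posDef_block := posDef_of_posDef_blockDiagonal' hS
  refine .of_mul_inv_mul_comm (posDef_block l) (fun n => hR n l) fun i j => ?_
  have comm := hJD.mul_inv_mul_comm hSR i j
  simp only [blockDiagonal'_inv fun l => (posDef_block l).isUnit, ← blockDiagonal'_mul] at comm
  exact congrFun (blockDiagonal'_injective comm) l

/-- if the Hermitian PSD block-diagonal matrices `R n = blkdiag (R n 1, …, R n L)`
with positive definite sum are jointly diagonalizable, then for every `l` the blocks
`R 1 l, …, R N l` are jointly diagonalizable. -/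
theorem blocks_jointlyDiagonalizable_of_blockDiagonal
    (N L : ℕ) (hN : 0 < N) (hL : 0 < L) (M : Fin L → ℕ) (hM : ∀ l, 0 < M l)
    (R : Fin N → ∀ l, Matrix (Fin (M l)) (Fin (M l)) ℂ)
    (hR : ∀ n l, (R n l).PosSemidef)
    (hS : (∑ n, Matrix.blockDiagonal' (R n)).PosDef)
    (hJD : JointlyDiagonalizable (fun n => Matrix.blockDiagonal' (R n))) :
    ∀ l, JointlyDiagonalizable (fun n => R n l) := by
  exact blocks_jointlyDiagonalizable_of_blockDiagonal_general (fun n l => (hR n l).isHermitian) hS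
    (Submodule.sum_mem _ fun n _ => Submodule.subset_span (Set.mem_range_self n)) hJD
end

section
/- Let I, J, M, K, N be nonempty finite index sets. Let y_{ijm} ∈ ℂ with y_{ijm} ≠ 0 for all (i,j,m) ∈ I×J×M, and let t_{ikn} > 0, v_{kjn} > 0, λ_{inm} > 0 be strictly positive reals for all relevant indices. Define η_{ijm}(t) = Σ_{k,n} t_{ikn} v_{kjn} λ_{inm} and the cost f(t) = Σ_{i,j,m} (|y_{ijm}|² / η_{ijm}(t) + ln η_{ijm}(t)). Define the multiplicative update t'_{ikn} = t_{ikn} · sqrt( (Σ_{j,m} v_{kjn} λ_{inm} |y_{ijm}|² η_{ijm}(t)^{−2}) / (Σ_{j,m} v_{kjn} λ_{inm} η_{ijm}(t)^{−1}) ) applied simultaneously for all (i,k,n). Then t'_{ikn} > 0 for all (i,k,n) and f(t') ≤ f(t). -/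
/-- `η i j m = ∑ k, ∑ n, t i k n * v k j n * λ i n m`. -/
def fmEta {I J M K N : Type*} [Fintype K] [Fintype N]
    (t : I → K → N → ℝ) (v : K → J → N → ℝ) (lam : I → N → M → ℝ)
    (i : I) (j : J) (m : M) : ℝ :=
  ∑ k, ∑ n, t i k n * v k j n * lam i n m

/-- FastMNMF cost `f = ∑ i j m, (|y i j m|² / η i j m + ln (η i j m))`. -/
noncomputable def fmCost {I J M K N : Type*}
    [Fintype I] [Fintype J] [Fintype M] [Fintype K] [Fintype N]
    (y : I → J → M → ℂ) (t : I → K → N → ℝ) (v : K → J → N → ℝ)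
    (lam : I → N → M → ℝ) : ℝ :=
  ∑ i, ∑ j, ∑ m,
    (‖y i j m‖ ^ 2 / fmEta t v lam i j m + Real.log (fmEta t v lam i j m))

/-- The multiplicative MM update of the spectral bases `t`. -/
noncomputable def fmTUpdate {I J M K N : Type*}
    [Fintype J] [Fintype M] [Fintype K] [Fintype N]
    (y : I → J → M → ℂ) (t : I → K → N → ℝ) (v : K → J → N → ℝ)
    (lam : I → N → M → ℝ) (i : I) (k : K) (n : N) : ℝ :=
  t i k n * Real.sqrt
    ((∑ j, ∑ m, v k j n * lam i n m * ‖y i j m‖ ^ 2 / (fmEta t v lam i j m) ^ 2) /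
     (∑ j, ∑ m, v k j n * lam i n m / fmEta t v lam i j m))

/-!
The argument is majorization–minimization, carried out separately for each frequency `i`, where the
model `η` is a nonnegative matrix `W` applied to the vector `x` of spectral bases. Around `x`, the
convex part `c / (W z)` of the cost is bounded by Cauchy–Schwarz and the concave part `log (W z)` by
its tangent. The resulting surrogate separates over the coordinates of `z` into functions
`p * x ^ 2 / z + q * z`, and it agrees with the cost at `z = x`. Each coordinate is minimized at
`z = x * √(p / q)`, which is the multiplicative update.
-/

section ItakuraSaito

open scoped Matrix

variable {A B : Type*} [Fintype B]

theorem dotProduct_pos_of_exists {u w : B → ℝ} (hu : ∀ b, 0 ≤ u b) (hw : ∀ b, 0 ≤ w b)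
    (h : ∃ b, 0 < u b ∧ 0 < w b) : 0 < u ⬝ᵥ w :=
  let ⟨b, hub, hwb⟩ := h
  Finset.sum_pos' (fun b _ => mul_nonneg (hu b) (hw b)) ⟨b, Finset.mem_univ b, mul_pos hub hwb⟩

theorem mulVec_pos_of_exists {W : Matrix A B ℝ} {x : B → ℝ} (hW : ∀ a b, 0 ≤ W a b)
    (hx : ∀ b, 0 < x b) {a : A} (ha : ∃ b, 0 < W a b) : 0 < (W *ᵥ x) a :=
  let ⟨b, hWab⟩ := ha
  dotProduct_pos_of_exists (hW a) (fun b => (hx b).le) ⟨b, hWab, hx b⟩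

theorem sq_dotProduct_le_dotProduct_mul_dotProduct_sq_div {w z : B → ℝ} (x : B → ℝ)
    (hw : ∀ b, 0 ≤ w b) (hz : ∀ b, 0 < z b) :
    (w ⬝ᵥ x) ^ 2 ≤ (w ⬝ᵥ z) * (w ⬝ᵥ (x ^ 2 / z)) := by
  refine Finset.sum_sq_le_sum_mul_sum_of_sq_le_mul _
    (fun b _ => mul_nonneg (hw b) (hz b).le)
    (fun b _ => mul_nonneg (hw b) (div_nonneg (sq_nonneg (x b)) (hz b).le)) fun b _ => le_of_eq ?_
  have hzb := (hz b).ne'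
  simp only [Pi.div_apply, Pi.pow_apply]
  field_simp

theorem log_le_log_add_inv_mul_sub {e e' : ℝ} (he : 0 < e) (he' : 0 < e') :
    Real.log e' ≤ Real.log e + e⁻¹ * (e' - e) := by
  have tangent := Real.log_le_sub_one_of_pos (div_pos he' he)
  rw [Real.log_div he'.ne' he.ne'] at tangent
  have : e⁻¹ * (e' - e) = e' / e - 1 := by field_simp
  linarith

theorem mul_sq_div_add_mul_le_of_eq_mul_sqrt {p q x z : ℝ} (hp : 0 < p) (hq : 0 < q) (hx : 0 < x)
    (hz : z = x * √(p / q)) : p * (x ^ 2 / z) + q * z ≤ p * x + q * x := by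
  subst hz
  set s := √(p / q)
  have hs : 0 < s := Real.sqrt_pos.2 (div_pos hp hq)
  have hps : p = s ^ 2 * q := by
    rw [Real.sq_sqrt (div_pos hp hq).le, div_mul_cancel₀ p hq.ne']
  calc p * (x ^ 2 / (x * s)) + q * (x * s) = q * x * (2 * s) := by rw [hps]; field_simp; ring
    _ ≤ q * x * (s ^ 2 + 1) := by
      have := two_mul_le_add_sq s 1
      gcongr
      linarith
    _ = p * x + q * x := by rw [hps]; ring

variable [Fintype A]

/-- The Itakura–Saito divergence from the observed powers `c` to the model powers `e`, up to terms
depending only on `c`; it is the part of the FastMNMF cost at one frequency. -/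
noncomputable def itakuraSaitoCost (c e : A → ℝ) : ℝ :=
  ∑ a, (c a / e a + Real.log (e a))

/-- Minus the gradient at `x` of the term `∑ a, c a / (W *ᵥ x) a` of the cost of the linear model
`W *ᵥ x`; it is the numerator of the multiplicative update. -/
noncomputable def costGradNeg (c : A → ℝ) (W : Matrix A B ℝ) (x : B → ℝ) : B → ℝ :=
  (c / (W *ᵥ x) ^ 2) ᵥ* W

/-- The gradient at `x` of the term `∑ a, log ((W *ᵥ x) a)` of the cost of the linear model
`W *ᵥ x`; it is the denominator of the multiplicative update. -/
noncomputable def costGradPos (W : Matrix A B ℝ) (x : B → ℝ) : B → ℝ :=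
  (W *ᵥ x)⁻¹ ᵥ* W

/-- The multiplicative update of the coefficients `x` of the linear model `W *ᵥ x` fitted to `c`. -/
noncomputable def mulUpdate (c : A → ℝ) (W : Matrix A B ℝ) (x : B → ℝ) (b : B) : ℝ :=
  x b * √(costGradNeg c W x b / costGradPos W x b)

/-- The majorizer at `x` of the cost of the linear model, as a function of the new coefficients
`z`. It is separable in `z`, and meaningful for `z` with positive entries only. -/
noncomputable def costSurrogate (c : A → ℝ) (W : Matrix A B ℝ) (x z : B → ℝ) : ℝ :=
  costGradNeg c W x ⬝ᵥ (x ^ 2 / z) + costGradPos W x ⬝ᵥ (z - x) + ∑ a, Real.log ((W *ᵥ x) a)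

variable {c : A → ℝ} {W : Matrix A B ℝ} {x z : B → ℝ}

theorem costGradNeg_pos (hc : ∀ a, 0 ≤ c a) (hW : ∀ a b, 0 ≤ W a b)
    (hWx : ∀ a, 0 < (W *ᵥ x) a) {b : B} (hb : ∃ a, 0 < c a ∧ 0 < W a b) :
    0 < costGradNeg c W x b :=
  let ⟨a, hca, hWab⟩ := hb
  dotProduct_pos_of_exists (fun a => div_nonneg (hc a) (sq_nonneg _)) (fun a => hW a b)
    ⟨a, div_pos hca (pow_pos (hWx a) 2), hWab⟩

theorem costGradPos_pos (hW : ∀ a b, 0 ≤ W a b) (hWx : ∀ a, 0 < (W *ᵥ x) a) {b : B}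
    (hb : ∃ a, 0 < W a b) : 0 < costGradPos W x b :=
  let ⟨a, hWab⟩ := hb
  dotProduct_pos_of_exists (fun a => (inv_pos.2 (hWx a)).le) (fun a => hW a b)
    ⟨a, inv_pos.2 (hWx a), hWab⟩

theorem mulUpdate_pos (hc : ∀ a, 0 ≤ c a) (hW : ∀ a b, 0 ≤ W a b)
    (hWx : ∀ a, 0 < (W *ᵥ x) a) {b : B} (hx : 0 < x b) (hb : ∃ a, 0 < c a ∧ 0 < W a b) :
    0 < mulUpdate c W x b :=
  mul_pos hx <| Real.sqrt_pos.2 <| div_pos (costGradNeg_pos hc hW hWx hb) <|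
    costGradPos_pos hW hWx (hb.imp fun _ => And.right)

theorem itakuraSaitoCost_mulVec_le_costSurrogate (hc : ∀ a, 0 ≤ c a) (hW : ∀ a b, 0 ≤ W a b)
    (hz : ∀ b, 0 < z b) (hWx : ∀ a, 0 < (W *ᵥ x) a) (hWz : ∀ a, 0 < (W *ᵥ z) a) :
    itakuraSaitoCost c (W *ᵥ z) ≤ costSurrogate c W x z := by
  have convex_part (a : A) :
      c a / (W *ᵥ z) a ≤ c a / (W *ᵥ x) a ^ 2 * (W *ᵥ (x ^ 2 / z)) a := by
    rw [div_mul_eq_mul_div, div_le_div_iff₀ (hWz a) (pow_pos (hWx a) 2), mul_assoc,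
      mul_comm ((W *ᵥ (x ^ 2 / z)) a)]
    exact mul_le_mul_of_nonneg_left
      (sq_dotProduct_le_dotProduct_mul_dotProduct_sq_div x (hW a) hz) (hc a)
  have concave_part (a : A) := log_le_log_add_inv_mul_sub (hWx a) (hWz a)
  calc itakuraSaitoCost c (W *ᵥ z)
      ≤ ∑ a, (c a / (W *ᵥ x) a ^ 2 * (W *ᵥ (x ^ 2 / z)) a +
          (Real.log ((W *ᵥ x) a) + ((W *ᵥ x) a)⁻¹ * ((W *ᵥ z) a - (W *ᵥ x) a))) :=
        Finset.sum_le_sum fun a _ => add_le_add (convex_part a) (concave_part a)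
    _ = (c / (W *ᵥ x) ^ 2) ⬝ᵥ (W *ᵥ (x ^ 2 / z)) + (W *ᵥ x)⁻¹ ⬝ᵥ (W *ᵥ (z - x)) +
          ∑ a, Real.log ((W *ᵥ x) a) := by
        rw [Matrix.mulVec_sub, add_assoc, add_comm ((W *ᵥ x)⁻¹ ⬝ᵥ _)]
        simp only [Finset.sum_add_distrib, dotProduct, Pi.div_apply, Pi.pow_apply, Pi.inv_apply,
          Pi.sub_apply]
    _ = costSurrogate c W x z := by
        rw [costSurrogate, costGradNeg, costGradPos, Matrix.dotProduct_mulVec,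
          Matrix.dotProduct_mulVec]

theorem costSurrogate_self (hWx : ∀ a, (W *ᵥ x) a ≠ 0) :
    costSurrogate c W x x = itakuraSaitoCost c (W *ᵥ x) := by
  have hsq : x ^ 2 / x = x := by
    rw [sq]
    exact funext fun b => mul_self_div_self (x b)
  have convex_part : costGradNeg c W x ⬝ᵥ x = ∑ a, c a / (W *ᵥ x) a := by
    rw [costGradNeg, ← Matrix.dotProduct_mulVec]
    refine Finset.sum_congr rfl fun a _ => ?_
    have := hWx a
    simp only [Pi.div_apply, Pi.pow_apply]
    field_simp
  rw [costSurrogate, itakuraSaitoCost, hsq, sub_self, dotProduct_zero, add_zero, convex_part,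
    Finset.sum_add_distrib]

theorem costSurrogate_mulUpdate_le (hx : ∀ b, 0 < x b) (hneg : ∀ b, 0 < costGradNeg c W x b)
    (hpos : ∀ b, 0 < costGradPos W x b) :
    costSurrogate c W x (mulUpdate c W x) ≤ costSurrogate c W x x := by
  simp only [costSurrogate, dotProduct, ← Finset.sum_add_distrib]
  refine add_le_add_left (Finset.sum_le_sum fun b _ => ?_) _
  have hmin := mul_sq_div_add_mul_le_of_eq_mul_sqrt (hneg b) (hpos b) (hx b)
    (z := mulUpdate c W x b) rfl
  have hsq : x b ^ 2 / x b = x b := by rw [sq, mul_self_div_self]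
  simp only [Pi.div_apply, Pi.pow_apply, Pi.sub_apply, hsq]
  linarith

theorem itakuraSaitoCost_mulVec_mulUpdate_le (hc : ∀ a, 0 ≤ c a) (hW : ∀ a b, 0 ≤ W a b)
    (hx : ∀ b, 0 < x b) (hrow : ∀ a, ∃ b, 0 < W a b) (hcol : ∀ b, ∃ a, 0 < c a ∧ 0 < W a b) :
    itakuraSaitoCost c (W *ᵥ mulUpdate c W x) ≤ itakuraSaitoCost c (W *ᵥ x) := by
  have hWx (a : A) : 0 < (W *ᵥ x) a := mulVec_pos_of_exists hW hx (hrow a)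
  have hx' (b : B) : 0 < mulUpdate c W x b := mulUpdate_pos hc hW hWx (hx b) (hcol b)
  have hWx' (a : A) : 0 < (W *ᵥ mulUpdate c W x) a := mulVec_pos_of_exists hW hx' (hrow a)
  calc itakuraSaitoCost c (W *ᵥ mulUpdate c W x)
      ≤ costSurrogate c W x (mulUpdate c W x) :=
        itakuraSaitoCost_mulVec_le_costSurrogate hc hW hx' hWx hWx'
    _ ≤ costSurrogate c W x x :=
        costSurrogate_mulUpdate_le hx (fun b => costGradNeg_pos hc hW hWx (hcol b))
          fun b => costGradPos_pos hW hWx ((hcol b).imp fun _ => And.right)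
    _ = itakuraSaitoCost c (W *ᵥ x) :=
        costSurrogate_self fun a => (hWx a).ne'

end ItakuraSaito

section FastMNMF

open scoped Matrix

variable {I J M K N : Type*}

/-- The observed powers `‖y i j m‖ ^ 2` at frequency `i`, as a vector indexed by `(j, m)`. -/
noncomputable def fmPower (y : I → J → M → ℂ) (i : I) (a : J × M) : ℝ :=
  ‖y i a.1 a.2‖ ^ 2

/-- The matrix taking the spectral bases at frequency `i`, a vector indexed by `(k, n)`, to the
model powers `η i j m`, a vector indexed by `(j, m)`. -/
def fmWeight (v : K → J → N → ℝ) (lam : I → N → M → ℝ) (i : I) : Matrix (J × M) (K × N) ℝ :=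
  .of fun a b => v b.1 a.1 b.2 * lam i b.2 a.2

variable (y : I → J → M → ℂ) (t : I → K → N → ℝ) (v : K → J → N → ℝ) (lam : I → N → M → ℝ)

theorem fmWeight_mulVec_uncurry [Fintype K] [Fintype N] (i : I) :
    fmWeight v lam i *ᵥ Function.uncurry (t i) = Function.uncurry (fmEta t v lam i) := by
  funext ⟨j, m⟩
  simp only [fmEta, fmWeight, Matrix.mulVec, dotProduct, Fintype.sum_prod_type, Matrix.of_apply,
    Function.uncurry_apply_pair]
  exact Fintype.sum_congr _ _ fun k => Fintype.sum_congr _ _ fun n => by ring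

theorem costGradNeg_fmWeight [Fintype J] [Fintype M] [Fintype K] [Fintype N]
    (i : I) (k : K) (n : N) :
    costGradNeg (fmPower y i) (fmWeight v lam i) (Function.uncurry (t i)) (k, n) =
      ∑ j, ∑ m, v k j n * lam i n m * ‖y i j m‖ ^ 2 / fmEta t v lam i j m ^ 2 := by
  rw [costGradNeg, fmWeight_mulVec_uncurry, Matrix.vecMul, dotProduct, Fintype.sum_prod_type]
  exact Fintype.sum_congr _ _ fun j => Fintype.sum_congr _ _ fun m =>
    (div_mul_eq_mul_div _ _ _).trans (congrArg (· / _) (mul_comm _ _))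

theorem costGradPos_fmWeight [Fintype J] [Fintype M] [Fintype K] [Fintype N]
    (i : I) (k : K) (n : N) :
    costGradPos (fmWeight v lam i) (Function.uncurry (t i)) (k, n) =
      ∑ j, ∑ m, v k j n * lam i n m / fmEta t v lam i j m := by
  rw [costGradPos, fmWeight_mulVec_uncurry, Matrix.vecMul, dotProduct, Fintype.sum_prod_type]
  exact Fintype.sum_congr _ _ fun j => Fintype.sum_congr _ _ fun m =>
    inv_mul_eq_div _ _

theorem uncurry_fmTUpdate_eq_mulUpdate [Fintype J] [Fintype M] [Fintype K] [Fintype N] (i : I) :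
    Function.uncurry (fmTUpdate y t v lam i) =
      mulUpdate (fmPower y i) (fmWeight v lam i) (Function.uncurry (t i)) := by
  funext ⟨k, n⟩
  rw [mulUpdate, costGradNeg_fmWeight, costGradPos_fmWeight, Function.uncurry_apply_pair,
    Function.uncurry_apply_pair, fmTUpdate]

theorem fmCost_eq_sum_itakuraSaitoCost [Fintype I] [Fintype J] [Fintype M] [Fintype K]
    [Fintype N] :
    fmCost y t v lam =
      ∑ i, itakuraSaitoCost (fmPower y i) (fmWeight v lam i *ᵥ Function.uncurry (t i)) := by
  simp only [fmCost, itakuraSaitoCost, fmPower, fmWeight_mulVec_uncurry,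
    Fintype.sum_prod_type, Function.uncurry_apply_pair]

end FastMNMF

theorem fmTUpdate_pos_and_cost_nonincreasing_general
    {I J M K N : Type*} [Fintype I] [Fintype J] [Fintype M] [Fintype K] [Fintype N]
    (y : I → J → M → ℂ) (t : I → K → N → ℝ) (v : K → J → N → ℝ) (lam : I → N → M → ℝ)
    (ht : ∀ i k n, 0 < t i k n) (hv : ∀ k j n, 0 ≤ v k j n) (hlam : ∀ i n m, 0 ≤ lam i n m)
    (hmodel : ∀ i j m, ∃ k n, 0 < v k j n * lam i n m)
    (hdata : ∀ i k n, ∃ j m, y i j m ≠ 0 ∧ 0 < v k j n * lam i n m) :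
    (∀ i k n, 0 < fmTUpdate y t v lam i k n) ∧
      fmCost y (fmTUpdate y t v lam) v lam ≤ fmCost y t v lam := by
  have hc (i : I) (a : J × M) : 0 ≤ fmPower y i a := sq_nonneg _
  have hW (i : I) (a : J × M) (b : K × N) : 0 ≤ fmWeight v lam i a b :=
    mul_nonneg (hv _ _ _) (hlam _ _ _)
  have hx (i : I) (b : K × N) : 0 < Function.uncurry (t i) b := ht i b.1 b.2
  have hrow (i : I) (a : J × M) : ∃ b, 0 < fmWeight v lam i a b :=
    let ⟨k, n, hkn⟩ := hmodel i a.1 a.2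
    ⟨(k, n), hkn⟩
  have hcol (i : I) (b : K × N) : ∃ a, 0 < fmPower y i a ∧ 0 < fmWeight v lam i a b :=
    let ⟨j, m, hy, hjm⟩ := hdata i b.1 b.2
    ⟨(j, m), pow_pos (norm_pos_iff.2 hy) 2, hjm⟩
  constructor
  · intro i k n
    have hpos := mulUpdate_pos (hc i) (hW i)
      (fun a => mulVec_pos_of_exists (hW i) (hx i) (hrow i a)) (hx i (k, n)) (hcol i (k, n))
    rwa [← uncurry_fmTUpdate_eq_mulUpdate] at hpos
  · simp only [fmCost_eq_sum_itakuraSaitoCost, uncurry_fmTUpdate_eq_mulUpdate]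
    exact Finset.sum_le_sum fun i _ =>
      itakuraSaitoCost_mulVec_mulUpdate_le (hc i) (hW i) (hx i) (hrow i) (hcol i)

/-- the multiplicative MM update of the spectral bases `t` preserves strict
positivity and does not increase the FastMNMF cost. -/
theorem fmTUpdate_pos_and_cost_nonincreasing
    {I J M K N : Type*}
    [Fintype I] [Fintype J] [Fintype M] [Fintype K] [Fintype N]
    [Nonempty I] [Nonempty J] [Nonempty M] [Nonempty K] [Nonempty N]
    (y : I → J → M → ℂ) (hy : ∀ i j m, y i j m ≠ 0)
    (t : I → K → N → ℝ) (v : K → J → N → ℝ) (lam : I → N → M → ℝ)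
    (ht : ∀ i k n, 0 < t i k n) (hv : ∀ k j n, 0 < v k j n)
    (hlam : ∀ i n m, 0 < lam i n m) :
    (∀ i k n, 0 < fmTUpdate y t v lam i k n) ∧
      fmCost y (fmTUpdate y t v lam) v lam ≤ fmCost y t v lam := by
  have hw (i j m k n) : 0 < v k j n * lam i n m := mul_pos (hv k j n) (hlam i n m)
  exact fmTUpdate_pos_and_cost_nonincreasing_general y t v lam ht (fun k j n => (hv k j n).le)
    (fun i n m => (hlam i n m).le)
    (fun i j m => ⟨Classical.arbitrary K, Classical.arbitrary N, hw _ _ _ _ _⟩)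
    fun i k n => ⟨Classical.arbitrary J, Classical.arbitrary M, hy _ _ _, hw _ _ _ _ _⟩
end
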